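/- arXiv:2312.07610 — 3 statements merged into one kernel-verified Lean document; each statement's English description precedes it below -/
import Mathlib

section
/- Three-way concordance under model M2: for any MTP g whose induced kernels q̃^g satisfy positivity B1.2, under consistency and condition B1.3 the counterfactual kernels q^{g,cf}_t coincide with q̃^g_t on all histories of positive probability, and consequently E[Y^g] = E[Y^{g,cf}] = E[Y^{q̃^g}] = Ψ_{q̃^g}(P); that is, the MTP mean γ_MTP, its g1-stochastic analogue γ_MTP-SI^{g1}, and the stochastic-regime mean γ_MTP-SI are all equal and all identified by the same g-formula. -/
open Classical

noncomputable section

/-- Probability of the event `S` under the probability mass function `P`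
on a finite sample space. -/
def pr {Ω : Type} [Fintype Ω] (P : Ω → ℝ) (S : Ω → Prop) : ℝ :=
  ∑ ω, if S ω then P ω else 0

/-- Conditional probability of `S` given `T`, with the convention that it is `0`
when the conditioning event is null (in Lean, `x / 0 = 0`). -/
def cpr {Ω : Type} [Fintype Ω] (P : Ω → ℝ) (S T : Ω → Prop) : ℝ :=
  pr P (fun ω => S ω ∧ T ω) / pr P T

/-- Expectation of `X` under `P`. -/
def expec {Ω : Type} [Fintype Ω] (P : Ω → ℝ) (X : Ω → ℝ) : ℝ :=
  ∑ ω, X ω * P ω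

/-- Conditional expectation of `X` given the event `T`, with the convention that
it is `0` when the conditioning event is null. -/
def cexp {Ω : Type} [Fintype Ω] (P : Ω → ℝ) (X : Ω → ℝ) (T : Ω → Prop) : ℝ :=
  (∑ ω, if T ω then X ω * P ω else 0) / pr P T

/-- Observed history event `{L̄_t = l̄_t, Ā_{t-1} = ā_{t-1}}` (covariates through
time `t`, treatments strictly before `t`). -/
def histEvent {Ω Lt : Type} {K : ℕ} (L : Fin K → Ω → Lt) (A : Fin K → Ω → Fin 2)
    (t : Fin K) (lbar : Fin K → Lt) (abar : Fin K → Fin 2) : Ω → Prop :=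
  fun ω => (∀ s, s ≤ t → L s ω = lbar s) ∧ (∀ s, s < t → A s ω = abar s)

/-- The g-formula `Ψ_q̃(P)` for an intervention-kernel collection `q`:
`Σ_{y,l̄_K,ā_K} y · p(y|l̄_K,ā_K) · ∏_j p(l_j|l̄_{j-1},ā_{j-1}) · ∏_t q̃_t(a_t|l̄_t,ā_{t-1})`. -/
def gform {Ω Lt : Type} [Fintype Ω] [Fintype Lt] {K : ℕ}
    (P : Ω → ℝ) (L : Fin K → Ω → Lt) (A : Fin K → Ω → Fin 2) (Y : Ω → ℝ)
    (q : Fin K → (Fin K → Lt) → (Fin K → Fin 2) → Fin 2 → ℝ) : ℝ :=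
  ∑ lbar : Fin K → Lt, ∑ abar : Fin K → Fin 2,
    cexp P Y (fun ω => (∀ s, L s ω = lbar s) ∧ (∀ s, A s ω = abar s))
      * (∏ j, cpr P (fun ω => L j ω = lbar j)
          (fun ω => (∀ s, s < j → L s ω = lbar s) ∧ (∀ s, s < j → A s ω = abar s)))
      * (∏ t, q t lbar abar (abar t))

/-- `q` is a collection of intervention kernels: each `q t lbar abar` is a
probability mass function on `{0,1}`. -/
def IsKernel {Lt : Type} {K : ℕ}
    (q : Fin K → (Fin K → Lt) → (Fin K → Fin 2) → Fin 2 → ℝ) : Prop :=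
  ∀ (t : Fin K) (lbar : Fin K → Lt) (abar : Fin K → Fin 2),
    (∀ a, 0 ≤ q t lbar abar a) ∧ (∑ a, q t lbar abar a) = 1

/-- The kernel at time `t` depends only on the history values `(l̄_t, ā_{t-1})`. -/
def KernelPrefixDep {Lt : Type} {K : ℕ}
    (q : Fin K → (Fin K → Lt) → (Fin K → Fin 2) → Fin 2 → ℝ) : Prop :=
  ∀ (t : Fin K) (lbar lbar' : Fin K → Lt) (abar abar' : Fin K → Fin 2),
    (∀ s, s ≤ t → lbar s = lbar' s) → (∀ s, s < t → abar s = abar' s) →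
    q t lbar abar = q t lbar' abar'

/-- Positivity condition B1.2. -/
def B12 {Ω Lt : Type} [Fintype Ω] {K : ℕ} (P : Ω → ℝ)
    (L : Fin K → Ω → Lt) (A : Fin K → Ω → Fin 2)
    (q : Fin K → (Fin K → Lt) → (Fin K → Fin 2) → Fin 2 → ℝ) : Prop :=
  ∀ (t : Fin K) (lbar : Fin K → Lt) (abar : Fin K → Fin 2),
    0 < pr P (histEvent L A t lbar abar) →
    ∀ a : Fin 2, 0 < q t lbar abar a →
      0 < cpr P (fun ω => A t ω = a) (histEvent L A t lbar abar)

/-- Counterfactual covariates and natural treatment values at time `t` depend on the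
static regime `ā` only through `(ā_1, ..., ā_{t-1})`. -/
def CfPrefixDep {Ω Lt : Type} {K : ℕ}
    (Lc : (Fin K → Fin 2) → Fin K → Ω → Lt)
    (Ac : (Fin K → Fin 2) → Fin K → Ω → Fin 2) : Prop :=
  ∀ (abar abar' : Fin K → Fin 2) (t : Fin K),
    (∀ s, s < t → abar s = abar' s) → Lc abar t = Lc abar' t ∧ Ac abar t = Ac abar' t

/-- Consistency of the counterfactual process with the observed data. -/
def CfConsistent {Ω Lt : Type} {K : ℕ}
    (L : Fin K → Ω → Lt) (A : Fin K → Ω → Fin 2) (Y : Ω → ℝ)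
    (Lc : (Fin K → Fin 2) → Fin K → Ω → Lt)
    (Ac : (Fin K → Fin 2) → Fin K → Ω → Fin 2)
    (Yc : (Fin K → Fin 2) → Ω → ℝ) : Prop :=
  (∀ (abar : Fin K → Fin 2) (t : Fin K) (ω : Ω),
    (∀ s, s < t → A s ω = abar s) → Lc abar t ω = L t ω ∧ Ac abar t ω = A t ω) ∧
  (∀ (abar : Fin K → Fin 2) (ω : Ω), (∀ s, A s ω = abar s) → Yc abar ω = Y ω)

/-- Counterfactual history event `{L̄_m(ā) = l̄_m, Ā_{m-1}(ā) = ā_{m-1}}`. -/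
def cfHist {Ω Lt : Type} {K : ℕ}
    (Lc : (Fin K → Fin 2) → Fin K → Ω → Lt)
    (Ac : (Fin K → Fin 2) → Fin K → Ω → Fin 2)
    (abar : Fin K → Fin 2) (m : Fin K) (lbar : Fin K → Lt) : Ω → Prop :=
  fun ω => (∀ s, s ≤ m → Lc abar s ω = lbar s) ∧ (∀ s, s < m → Ac abar s ω = abar s)

/-- Sequential exchangeability condition B1.4: for every `m` and `ā`, the vector
`(L_{m+1}(ā), ..., L_K(ā), Y(ā))` is conditionally independent of the indicator
`1{A_m(ā) = ā_m}` given each positive-probability counterfactual history. -/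
def B14 {Ω Lt : Type} [Fintype Ω] {K : ℕ} (P : Ω → ℝ)
    (Lc : (Fin K → Fin 2) → Fin K → Ω → Lt)
    (Ac : (Fin K → Fin 2) → Fin K → Ω → Fin 2)
    (Yc : (Fin K → Fin 2) → Ω → ℝ) : Prop :=
  ∀ (m : Fin K) (abar : Fin K → Fin 2) (lbar : Fin K → Lt),
    0 < pr P (cfHist Lc Ac abar m lbar) →
    ∀ (lv : Fin K → Lt) (y : ℝ),
      cpr P (fun ω => ((∀ s, m < s → Lc abar s ω = lv s) ∧ Yc abar ω = y)
            ∧ Ac abar m ω = abar m)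
          (cfHist Lc Ac abar m lbar)
        = cpr P (fun ω => (∀ s, m < s → Lc abar s ω = lv s) ∧ Yc abar ω = y)
              (cfHist Lc Ac abar m lbar)
          * cpr P (fun ω => Ac abar m ω = abar m) (cfHist Lc Ac abar m lbar)

/-- Sequential exchangeability condition B1.3: as B1.4, but with the future vector
enlarged to `(L_{m+1}(ā), ..., L_K(ā), A_{m+1}(ā), ..., A_K(ā), Y(ā))`. -/
def B13 {Ω Lt : Type} [Fintype Ω] {K : ℕ} (P : Ω → ℝ)
    (Lc : (Fin K → Fin 2) → Fin K → Ω → Lt)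
    (Ac : (Fin K → Fin 2) → Fin K → Ω → Fin 2)
    (Yc : (Fin K → Fin 2) → Ω → ℝ) : Prop :=
  ∀ (m : Fin K) (abar : Fin K → Fin 2) (lbar : Fin K → Lt),
    0 < pr P (cfHist Lc Ac abar m lbar) →
    ∀ (lv : Fin K → Lt) (av : Fin K → Fin 2) (y : ℝ),
      cpr P (fun ω => ((∀ s, m < s → Lc abar s ω = lv s)
              ∧ (∀ s, m < s → Ac abar s ω = av s) ∧ Yc abar ω = y)
            ∧ Ac abar m ω = abar m)
          (cfHist Lc Ac abar m lbar)
        = cpr P (fun ω => (∀ s, m < s → Lc abar s ω = lv s)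
              ∧ (∀ s, m < s → Ac abar s ω = av s) ∧ Yc abar ω = y)
              (cfHist Lc Ac abar m lbar)
          * cpr P (fun ω => Ac abar m ω = abar m) (cfHist Lc Ac abar m lbar)

/-- Mean outcome under the stochastic regime with intervention kernels `q`:
`E[Y^q̃] = Σ_{ā} E[ Y(ā) · ∏_t q̃_t(ā_t | L̄_t(ā), ā_{t-1}) ]`. -/
def stochMean {Ω Lt : Type} [Fintype Ω] {K : ℕ} (P : Ω → ℝ)
    (Lc : (Fin K → Fin 2) → Fin K → Ω → Lt)
    (Yc : (Fin K → Fin 2) → Ω → ℝ)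
    (q : Fin K → (Fin K → Lt) → (Fin K → Fin 2) → Fin 2 → ℝ) : ℝ :=
  ∑ abar : Fin K → Fin 2,
    expec P (fun ω => Yc abar ω * ∏ t, q t (fun s => Lc abar s ω) abar (abar t))

/-- The decision functions of a modified treatment policy depend only on
`(a, l̄_t, ā_{t-1})`. -/
def PolPrefixDep {Lt : Type} {K : ℕ}
    (g : Fin K → Fin 2 → (Fin K → Lt) → (Fin K → Fin 2) → Fin 2) : Prop :=
  ∀ (t : Fin K) (a : Fin 2) (lbar lbar' : Fin K → Lt) (abar abar' : Fin K → Fin 2),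
    (∀ s, s ≤ t → lbar s = lbar' s) → (∀ s, s < t → abar s = abar' s) →
    g t a lbar abar = g t a lbar' abar'

/-- `Ap` is the recursively defined assigned-treatment process `Ā⁺` of the MTP `g`:
`A⁺_t = g_t(A_t(Ā⁺_{t-1}), L̄_t(Ā⁺_{t-1}), Ā⁺_{t-1})`. -/
def IsMTPProcess {Ω Lt : Type} {K : ℕ}
    (Lc : (Fin K → Fin 2) → Fin K → Ω → Lt)
    (Ac : (Fin K → Fin 2) → Fin K → Ω → Fin 2)
    (g : Fin K → Fin 2 → (Fin K → Lt) → (Fin K → Fin 2) → Fin 2)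
    (Ap : Fin K → Ω → Fin 2) : Prop :=
  ∀ (t : Fin K) (ω : Ω),
    Ap t ω = g t (Ac (fun s => Ap s ω) t ω)
        (fun s => Lc (fun s' => Ap s' ω) s ω) (fun s => Ap s ω)

/-- Induced intervention kernels `q̃^g` of an MTP:
`q̃^g_t(a⁺ | l̄_t, ā_{t-1}) = Σ_{a : g_t(a,l̄_t,ā_{t-1}) = a⁺} P(A_t = a | L̄_t = l̄_t, Ā_{t-1} = ā_{t-1})`. -/
def qMTP {Ω Lt : Type} [Fintype Ω] {K : ℕ} (P : Ω → ℝ)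
    (L : Fin K → Ω → Lt) (A : Fin K → Ω → Fin 2)
    (g : Fin K → Fin 2 → (Fin K → Lt) → (Fin K → Fin 2) → Fin 2) :
    Fin K → (Fin K → Lt) → (Fin K → Fin 2) → Fin 2 → ℝ :=
  fun t lbar abar aplus =>
    ∑ a : Fin 2, if g t a lbar abar = aplus then
      cpr P (fun ω => A t ω = a) (histEvent L A t lbar abar) else 0

/-- Counterfactual (g1-stochastic) kernels `q^{g,cf}` of an MTP:
`q^{g,cf}_t(a⁺ | l̄_t, ā⁺_{t-1}) = P( g_t(A_t(Ā⁺_{t-1}), l̄_t, ā⁺_{t-1}) = a⁺ |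
  L̄_t(Ā⁺_{t-1}) = l̄_t, Ā⁺_{t-1} = ā⁺_{t-1} )`. -/
def qMTPcf {Ω Lt : Type} [Fintype Ω] {K : ℕ} (P : Ω → ℝ)
    (Lc : (Fin K → Fin 2) → Fin K → Ω → Lt)
    (Ac : (Fin K → Fin 2) → Fin K → Ω → Fin 2)
    (g : Fin K → Fin 2 → (Fin K → Lt) → (Fin K → Fin 2) → Fin 2)
    (Ap : Fin K → Ω → Fin 2) :
    Fin K → (Fin K → Lt) → (Fin K → Fin 2) → Fin 2 → ℝ :=
  fun t lbar abar aplus =>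
    cpr P (fun ω => g t (Ac (fun s => Ap s ω) t ω) lbar abar = aplus)
      (fun ω => (∀ s, s ≤ t → Lc (fun s' => Ap s' ω) s ω = lbar s) ∧
        (∀ s, s < t → Ap s ω = abar s))

/-- Restricted expectation. -/
def rI {Ω : Type} [Fintype Ω] (P : Ω → ℝ) (S : Ω → Prop) (F : Ω → ℝ) : ℝ :=
  ∑ ω, if S ω then F ω * P ω else 0

lemma rI_congr {Ω : Type} [Fintype Ω] {P : Ω → ℝ} {S T : Ω → Prop} {F G : Ω → ℝ}
    (h : ∀ ω, S ω ↔ T ω) (h2 : ∀ ω, S ω → F ω = G ω) : rI P S F = rI P T G := by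
  unfold rI
  refine Finset.sum_congr rfl fun ω _ => ?_
  by_cases hs : S ω
  · rw [if_pos hs, if_pos ((h ω).1 hs), h2 ω hs]
  · rw [if_neg hs, if_neg (fun ht => hs ((h ω).2 ht))]

lemma pr_eq_rI {Ω : Type} [Fintype Ω] (P : Ω → ℝ) (S : Ω → Prop) :
    pr P S = rI P S (fun _ => 1) := by
  simp [pr, rI]

lemma pr_congr {Ω : Type} [Fintype Ω] {P : Ω → ℝ} {S T : Ω → Prop}
    (h : ∀ ω, S ω ↔ T ω) : pr P S = pr P T := by
  rw [pr_eq_rI, pr_eq_rI]; exact rI_congr h fun _ _ => rfl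

lemma pr_nonneg {Ω : Type} [Fintype Ω] {P : Ω → ℝ} (hP0 : ∀ ω, 0 ≤ P ω) (S : Ω → Prop) :
    0 ≤ pr P S := by
  refine Finset.sum_nonneg fun ω _ => ?_
  split_ifs
  · exact hP0 ω
  · exact le_refl _

lemma pr_mono {Ω : Type} [Fintype Ω] {P : Ω → ℝ} (hP0 : ∀ ω, 0 ≤ P ω) {S T : Ω → Prop}
    (h : ∀ ω, S ω → T ω) : pr P S ≤ pr P T := by
  refine Finset.sum_le_sum fun ω _ => ?_
  by_cases hs : S ω
  · rw [if_pos hs, if_pos (h ω hs)]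
  · rw [if_neg hs]
    split_ifs
    · exact hP0 ω
    · exact le_refl _

lemma rI_null {Ω : Type} [Fintype Ω] {P : Ω → ℝ} (hP0 : ∀ ω, 0 ≤ P ω) {S T : Ω → Prop}
    (h : pr P T = 0) (hST : ∀ ω, S ω → T ω) (F : Ω → ℝ) : rI P S F = 0 := by
  unfold rI
  refine Finset.sum_eq_zero fun ω _ => ?_
  split_ifs with hs
  · have := (Finset.sum_eq_zero_iff_of_nonneg (s := Finset.univ)
      (f := fun ω => if T ω then P ω else 0)
      (fun ω _ => by split_ifs; exacts [hP0 ω, le_refl _])).1 h ω (Finset.mem_univ _)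
    rw [if_pos (hST ω hs)] at this
    rw [this, mul_zero]
  · rfl

lemma rI_ind {Ω : Type} [Fintype Ω] (P : Ω → ℝ) (S T : Ω → Prop) (F : Ω → ℝ) :
    rI P S (fun ω => F ω * if T ω then 1 else 0) = rI P (fun ω => S ω ∧ T ω) F := by
  unfold rI
  refine Finset.sum_congr rfl fun ω _ => ?_
  by_cases hs : S ω <;> by_cases ht : T ω <;> simp [hs, ht]

lemma rI_fib {Ω κ : Type} [Fintype Ω] [DecidableEq κ] (P : Ω → ℝ) (S : Ω → Prop) (F : Ω → ℝ) (X : Ω → κ) :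
    rI P S F = ∑ x ∈ Finset.univ.image X, rI P (fun ω => S ω ∧ X ω = x) F := by
  unfold rI
  rw [Finset.sum_comm]
  refine Finset.sum_congr rfl fun ω _ => ?_
  rw [Finset.sum_eq_single (X ω)]
  · simp
  · intro b _ hb; rw [if_neg]; rintro ⟨_, h⟩; exact hb h.symm
  · intro h; exact absurd (Finset.mem_image_of_mem X (Finset.mem_univ ω)) h

lemma rI_fib_univ {Ω κ : Type} [Fintype Ω] [Fintype κ] (P : Ω → ℝ) (S : Ω → Prop)
    (F : Ω → ℝ) (X : Ω → κ) :
    rI P S F = ∑ x, rI P (fun ω => S ω ∧ X ω = x) F := by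
  unfold rI
  rw [Finset.sum_comm]
  refine Finset.sum_congr rfl fun ω _ => ?_
  rw [Finset.sum_eq_single (X ω)]
  · simp
  · intro b _ hb; rw [if_neg]; rintro ⟨_, h⟩; exact hb h.symm
  · intro h; exact absurd (Finset.mem_univ _) h

lemma rI_const {Ω : Type} [Fintype Ω] {P : Ω → ℝ} {S : Ω → Prop} {F : Ω → ℝ} (c : ℝ)
    (h : ∀ ω, S ω → F ω = c) : rI P S F = c * pr P S := by
  unfold rI pr
  rw [Finset.mul_sum]
  refine Finset.sum_congr rfl fun ω _ => ?_
  split_ifs with hs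
  · rw [h ω hs]
  · simp

lemma rI_mul_const {Ω : Type} [Fintype Ω] (P : Ω → ℝ) (S : Ω → Prop) (F : Ω → ℝ) (c : ℝ) :
    rI P S (fun ω => F ω * c) = c * rI P S F := by
  unfold rI
  rw [Finset.mul_sum]
  refine Finset.sum_congr rfl fun ω _ => ?_
  split_ifs
  · ring
  · simp

/-- `F` is a function of the counterfactual future from index `n` on. -/
def Fut {Ω Lt : Type} {K : ℕ}
    (Lc : (Fin K → Fin 2) → Fin K → Ω → Lt)
    (Ac : (Fin K → Fin 2) → Fin K → Ω → Fin 2)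
    (Yc : (Fin K → Fin 2) → Ω → ℝ) (abar : Fin K → Fin 2) (n : ℕ) (F : Ω → ℝ) : Prop :=
  ∀ ω ω', (∀ s : Fin K, n ≤ s.val →
    Lc abar s ω = Lc abar s ω' ∧ Ac abar s ω = Ac abar s ω') →
    Yc abar ω = Yc abar ω' → F ω = F ω'

lemma indep_fut {Ω Lt : Type} [Fintype Ω] {K : ℕ} {P : Ω → ℝ} (hP0 : ∀ ω, 0 ≤ P ω)
    {Lc : (Fin K → Fin 2) → Fin K → Ω → Lt}
    {Ac : (Fin K → Fin 2) → Fin K → Ω → Fin 2}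
    {Yc : (Fin K → Fin 2) → Ω → ℝ} (hB13 : B13 P Lc Ac Yc)
    (abar : Fin K → Fin 2) (lbar : Fin K → Lt) (m : Fin K) {F : Ω → ℝ}
    (hF : Fut Lc Ac Yc abar (m.val + 1) F) :
    rI P (fun ω => cfHist Lc Ac abar m lbar ω ∧ Ac abar m ω = abar m) F
        * pr P (cfHist Lc Ac abar m lbar)
      = rI P (cfHist Lc Ac abar m lbar) F
        * pr P (fun ω => cfHist Lc Ac abar m lbar ω ∧ Ac abar m ω = abar m) := by
  rcases (pr_nonneg hP0 (cfHist Lc Ac abar m lbar)).eq_or_lt with h0 | hpos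
  · rw [rI_null hP0 h0.symm (fun _ h => h) F, ← h0]; simp
  let X : Ω → (Fin K → Option Lt) × (Fin K → Option (Fin 2)) × ℝ := fun ω =>
    (fun s => if m < s then some (Lc abar s ω) else none,
     fun s => if m < s then some (Ac abar s ω) else none, Yc abar ω)
  have hX : ∀ ω ω0, X ω = X ω0 ↔ ((∀ s, m < s → Lc abar s ω = Lc abar s ω0)
              ∧ (∀ s, m < s → Ac abar s ω = Ac abar s ω0) ∧ Yc abar ω = Yc abar ω0) := by
    intro ω ω0
    simp only [X, Prod.mk.injEq, funext_iff]
    refine and_congr (forall_congr' fun s => ?_) (and_congr (forall_congr' fun s => ?_) Iff.rfl)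
    · by_cases h : m < s <;> simp [h]
    · by_cases h : m < s <;> simp [h]
  rw [rI_fib P _ F X, rI_fib P (cfHist Lc Ac abar m lbar) F X, Finset.sum_mul, Finset.sum_mul]
  refine Finset.sum_congr rfl fun x hx => ?_
  obtain ⟨ω0, -, rfl⟩ := Finset.mem_image.1 hx
  have hc : ∀ ω, X ω = X ω0 → F ω = F ω0 := by
    intro ω h
    obtain ⟨h1, h2, h3⟩ := (hX ω ω0).1 h
    exact hF ω ω0 (fun s hs => ⟨h1 s hs, h2 s hs⟩) h3
  rw [rI_const (F ω0) (fun ω h => hc ω h.2), rI_const (F ω0) (fun ω h => hc ω h.2)]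
  have key := hB13 m abar lbar hpos (fun s => Lc abar s ω0) (fun s => Ac abar s ω0) (Yc abar ω0)
  unfold cpr at key
  have e1 := pr_congr (P := P) (S := fun ω => (cfHist Lc Ac abar m lbar ω ∧ Ac abar m ω = abar m)
      ∧ X ω = X ω0) (T := fun ω => (((∀ s, m < s → Lc abar s ω = Lc abar s ω0)
              ∧ (∀ s, m < s → Ac abar s ω = Ac abar s ω0) ∧ Yc abar ω = Yc abar ω0)
            ∧ Ac abar m ω = abar m) ∧ cfHist Lc Ac abar m lbar ω)
      (fun ω => by rw [hX]; tauto)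
  have e2 := pr_congr (P := P) (S := fun ω => cfHist Lc Ac abar m lbar ω
      ∧ X ω = X ω0) (T := fun ω => ((∀ s, m < s → Lc abar s ω = Lc abar s ω0)
              ∧ (∀ s, m < s → Ac abar s ω = Ac abar s ω0) ∧ Yc abar ω = Yc abar ω0)
            ∧ cfHist Lc Ac abar m lbar ω)
      (fun ω => by rw [hX]; tauto)
  have e3 := pr_congr (P := P) (S := fun ω => cfHist Lc Ac abar m lbar ω ∧ Ac abar m ω = abar m)
      (T := fun ω => Ac abar m ω = abar m ∧ cfHist Lc Ac abar m lbar ω)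
      (fun ω => by tauto)
  rw [e1, e2, e3]
  have hne := hpos.ne'
  field_simp at key
  linear_combination (F ω0) * key

lemma hist_iff {Ω Lt : Type} {K : ℕ}
    {L : Fin K → Ω → Lt} {A : Fin K → Ω → Fin 2} {Y : Ω → ℝ}
    {Lc : (Fin K → Fin 2) → Fin K → Ω → Lt}
    {Ac : (Fin K → Fin 2) → Fin K → Ω → Fin 2}
    {Yc : (Fin K → Fin 2) → Ω → ℝ}
    (hcons : CfConsistent L A Y Lc Ac Yc) (abar : Fin K → Fin 2) (ω : Ω) (n : ℕ) :
    (∀ s : Fin K, s.val < n → Ac abar s ω = abar s) ↔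
      (∀ s : Fin K, s.val < n → A s ω = abar s) := by
  constructor
  · intro h
    have : ∀ k : ℕ, ∀ s : Fin K, s.val = k → s.val < n → A s ω = abar s := by
      intro k
      induction k using Nat.strong_induction_on with
      | _ k ih =>
        intro s hs hn
        rw [← h s hn]
        exact ((hcons.1 abar s ω (fun r hr => ih r.val (by omega) r rfl (by omega))).2).symm
    exact fun s hs => this _ s rfl hs
  · intro h s hs
    rw [← h s hs]
    exact (hcons.1 abar s ω (fun r hr => h r (by omega))).2

lemma cfHist_iff {Ω Lt : Type} {K : ℕ}
    {L : Fin K → Ω → Lt} {A : Fin K → Ω → Fin 2} {Y : Ω → ℝ}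
    {Lc : (Fin K → Fin 2) → Fin K → Ω → Lt}
    {Ac : (Fin K → Fin 2) → Fin K → Ω → Fin 2}
    {Yc : (Fin K → Fin 2) → Ω → ℝ}
    (hcons : CfConsistent L A Y Lc Ac Yc) (abar : Fin K → Fin 2) (lbar : Fin K → Lt)
    (t : Fin K) (ω : Ω) :
    histEvent L A t lbar abar ω ↔ cfHist Lc Ac abar t lbar ω := by
  have h := hist_iff hcons abar ω t.val
  unfold histEvent cfHist
  constructor
  · rintro ⟨h1, h2⟩
    refine ⟨fun s hs => ?_, fun s hs => h.2 (fun r hr => h2 r hr) s hs⟩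
    rw [← h1 s hs]
    exact (hcons.1 abar s ω (fun r hr => h2 r (lt_of_lt_of_le hr hs))).1
  · rintro ⟨h1, h2⟩
    have h3 := h.1 (fun r hr => h2 r hr)
    refine ⟨fun s hs => ?_, fun s hs => h3 s hs⟩
    rw [← h1 s hs]
    exact ((hcons.1 abar s ω (fun r hr => h3 r (lt_of_lt_of_le hr hs))).1).symm

/-- Product of `r` over indices below `n`. -/
def pp {K : ℕ} (r : Fin K → ℝ) (n : ℕ) : ℝ := ∏ s with s.val < n, r s

lemma pp_zero {K : ℕ} (r : Fin K → ℝ) : pp r 0 = 1 := by simp [pp]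

lemma pp_top {K : ℕ} (r : Fin K → ℝ) : pp r K = ∏ s, r s := by simp [pp]

lemma pp_succ {K : ℕ} (r : Fin K → ℝ) (m : Fin K) : pp r (m.val + 1) = pp r m.val * r m := by
  unfold pp
  have : (Finset.univ.filter fun s : Fin K => s.val < m.val + 1)
      = insert m (Finset.univ.filter fun s : Fin K => s.val < m.val) := by
    ext s
    simp only [Finset.mem_filter, Finset.mem_univ, true_and, Finset.mem_insert, Fin.ext_iff]
    omega
  rw [this, Finset.prod_insert (by simp), mul_comm]

section core

variable {Ω Lt : Type} [Fintype Ω] {K : ℕ} {P : Ω → ℝ}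
    {L : Fin K → Ω → Lt} {A : Fin K → Ω → Fin 2} {Y : Ω → ℝ}
    {Lc : (Fin K → Fin 2) → Fin K → Ω → Lt}
    {Ac : (Fin K → Fin 2) → Fin K → Ω → Fin 2}
    {Yc : (Fin K → Fin 2) → Ω → ℝ}
    {g : Fin K → Fin 2 → (Fin K → Lt) → (Fin K → Fin 2) → Fin 2}

/-- Propensity. -/
def prop (P : Ω → ℝ) (L : Fin K → Ω → Lt) (A : Fin K → Ω → Fin 2)
    (abar : Fin K → Fin 2) (lbar : Fin K → Lt) (t : Fin K) : ℝ :=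
  cpr P (fun ω => A t ω = abar t) (histEvent L A t lbar abar)

lemma prop_cf (hcons : CfConsistent L A Y Lc Ac Yc) (abar : Fin K → Fin 2)
    (lbar : Fin K → Lt) (m : Fin K) (a : Fin 2) :
    cpr P (fun ω => A m ω = a) (histEvent L A m lbar abar)
      = pr P (fun ω => cfHist Lc Ac abar m lbar ω ∧ Ac abar m ω = a)
        / pr P (cfHist Lc Ac abar m lbar) := by
  unfold cpr
  rw [pr_congr (cfHist_iff hcons abar lbar m)]
  congr 1
  refine pr_congr fun ω => ?_
  rw [cfHist_iff hcons abar lbar m, and_comm]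
  refine and_congr_right fun h => ?_
  rw [(hcons.1 abar m ω (((cfHist_iff hcons abar lbar m ω).2 h).2)).2]

lemma key1 (hP0 : ∀ ω, 0 ≤ P ω) (hcons : CfConsistent L A Y Lc Ac Yc)
    (hB12 : B12 P L A (qMTP P L A g)) (hB13 : B13 P Lc Ac Yc)
    (abar : Fin K → Fin 2) (lbar : Fin K → Lt) (m : Fin K) {F : Ω → ℝ}
    (hF : Fut Lc Ac Yc abar (m.val + 1) F) :
    qMTP P L A g m lbar abar (abar m) * rI P (cfHist Lc Ac abar m lbar) F
      = qMTP P L A g m lbar abar (abar m) / prop P L A abar lbar m *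
        rI P (fun ω => cfHist Lc Ac abar m lbar ω ∧ Ac abar m ω = abar m) F := by
  rcases (pr_nonneg hP0 (cfHist Lc Ac abar m lbar)).eq_or_lt with h0 | hpos
  · rw [rI_null hP0 h0.symm (fun _ h => h) F, rI_null hP0 h0.symm (fun _ h => h.1) F]; simp
  have hq : 0 ≤ qMTP P L A g m lbar abar (abar m) := by
    unfold qMTP
    refine Finset.sum_nonneg fun a _ => ?_
    split_ifs
    · exact div_nonneg (pr_nonneg hP0 _) (pr_nonneg hP0 _)
    · exact le_refl _
  rcases hq.eq_or_lt with hq0 | hqpos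
  · rw [← hq0]; simp
  have hpi := hB12 m lbar abar (by rwa [pr_congr (cfHist_iff hcons abar lbar m)]) _ hqpos
  have hI := indep_fut hP0 hB13 abar lbar m hF
  unfold prop
  rw [prop_cf hcons] at hpi ⊢
  have h1 : pr P (fun ω => cfHist Lc Ac abar m lbar ω ∧ Ac abar m ω = abar m) ≠ 0 := by
    intro h; rw [h] at hpi; simp at hpi
  have h2 := hpos.ne'
  field_simp
  linear_combination -hI

lemma fin2_split (P : Ω → ℝ) (S : Ω → Prop) (Z : Ω → Fin 2) (F : Ω → ℝ) (a : Fin 2) :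
    rI P S F = rI P (fun ω => S ω ∧ Z ω = a) F + rI P (fun ω => S ω ∧ Z ω = 1 - a) F := by
  rw [rI_fib_univ P S F Z, Fin.sum_univ_two]
  fin_cases a
  · rfl
  · exact add_comm _ _

lemma indep_all (hP0 : ∀ ω, 0 ≤ P ω) (hB13 : B13 P Lc Ac Yc)
    (abar : Fin K → Fin 2) (lbar : Fin K → Lt) (m : Fin K) {F : Ω → ℝ}
    (hF : Fut Lc Ac Yc abar (m.val + 1) F) (a : Fin 2) :
    rI P (fun ω => cfHist Lc Ac abar m lbar ω ∧ Ac abar m ω = a) F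
        * pr P (cfHist Lc Ac abar m lbar)
      = rI P (cfHist Lc Ac abar m lbar) F
        * pr P (fun ω => cfHist Lc Ac abar m lbar ω ∧ Ac abar m ω = a) := by
  have h := indep_fut hP0 hB13 abar lbar m hF
  by_cases ha : a = abar m
  · rw [ha]; exact h
  · have ha' : a = 1 - abar m := by
      revert ha; generalize abar m = b; revert a b; decide
    have s1 := fin2_split P (cfHist Lc Ac abar m lbar) (Ac abar m) F (abar m)
    have s2 := fin2_split P (cfHist Lc Ac abar m lbar) (Ac abar m) (fun _ => 1) (abar m)
    simp only [← pr_eq_rI] at s2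
    rw [← ha'] at s1 s2
    linear_combination (pr P (cfHist Lc Ac abar m lbar)) * (-s1) + (rI P (cfHist Lc Ac abar m lbar) F) * s2 - h

lemma key2 (hP0 : ∀ ω, 0 ≤ P ω) (hcons : CfConsistent L A Y Lc Ac Yc)
    (hB13 : B13 P Lc Ac Yc)
    (abar : Fin K → Fin 2) (lbar : Fin K → Lt) (m : Fin K) {F : Ω → ℝ}
    (hF : Fut Lc Ac Yc abar (m.val + 1) F) (ap : Fin 2) :
    rI P (fun ω => cfHist Lc Ac abar m lbar ω ∧ g m (Ac abar m ω) lbar abar = ap) F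
      = qMTP P L A g m lbar abar ap * rI P (cfHist Lc Ac abar m lbar) F := by
  rcases (pr_nonneg hP0 (cfHist Lc Ac abar m lbar)).eq_or_lt with h0 | hpos
  · rw [rI_null hP0 h0.symm (fun _ h => h) F, rI_null hP0 h0.symm (fun _ h => h.1) F]; simp
  rw [rI_fib_univ P _ F (Ac abar m)]
  unfold qMTP
  rw [Finset.sum_mul]
  refine Finset.sum_congr rfl fun a _ => ?_
  rw [prop_cf hcons]
  have h := indep_all hP0 hB13 abar lbar m hF a
  split_ifs with hga
  · rw [rI_congr (T := fun ω => cfHist Lc Ac abar m lbar ω ∧ Ac abar m ω = a) (G := F) _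
      (fun _ _ => rfl)]
    · have h2 := hpos.ne'
      field_simp
      linear_combination h
    · intro ω
      constructor
      · rintro ⟨⟨h1, -⟩, h3⟩; exact ⟨h1, h3⟩
      · rintro ⟨h1, h3⟩; exact ⟨⟨h1, by rw [h3]; exact hga⟩, h3⟩
  · rw [zero_mul]
    unfold rI
    refine Finset.sum_eq_zero fun ω _ => if_neg ?_
    rintro ⟨⟨-, h2⟩, h3⟩
    rw [h3] at h2; exact hga h2

/-- Counterfactual full history below `n`. -/
def cH (Lc : (Fin K → Fin 2) → Fin K → Ω → Lt) (Ac : (Fin K → Fin 2) → Fin K → Ω → Fin 2)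
    (abar : Fin K → Fin 2) (lbar : Fin K → Lt) (n : ℕ) : Ω → Prop :=
  fun ω => ∀ s : Fin K, s.val < n → Lc abar s ω = lbar s ∧ Ac abar s ω = abar s

lemma forall_lt_succ {m : Fin K} {p : Fin K → Prop} :
    (∀ s : Fin K, s.val < m.val + 1 → p s) ↔ (∀ s : Fin K, s.val < m.val → p s) ∧ p m := by
  constructor
  · exact fun h => ⟨fun s hs => h s (by omega), h m (by omega)⟩
  · rintro ⟨h1, h2⟩ s hs
    rcases Nat.lt_succ_iff_lt_or_eq.1 hs with h | h
    · exact h1 s h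
    · rw [Fin.ext h]; exact h2

lemma cfHist_cH (abar : Fin K → Fin 2) (lbar : Fin K → Lt) (m : Fin K) (ω : Ω) :
    cfHist Lc Ac abar m lbar ω ↔ cH Lc Ac abar lbar m.val ω ∧ Lc abar m ω = lbar m := by
  unfold cfHist cH
  constructor
  · rintro ⟨h1, h2⟩
    exact ⟨fun s hs => ⟨h1 s (Fin.le_def.2 hs.le), h2 s hs⟩, h1 m le_rfl⟩
  · rintro ⟨h1, h2⟩
    refine ⟨fun s hs => ?_, fun s hs => (h1 s hs).2⟩
    rcases hs.lt_or_eq with h | h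
    · exact (h1 s h).1
    · rw [h]; exact h2

lemma fut_mono {abar : Fin K → Fin 2} {n k : ℕ} (hnk : n ≤ k) {F : Ω → ℝ}
    (hF : Fut Lc Ac Yc abar k F) : Fut Lc Ac Yc abar n F :=
  fun ω ω' h hy => hF ω ω' (fun s hs => h s (hnk.trans hs)) hy

/-- Weight ratios. -/
def wr (P : Ω → ℝ) (L : Fin K → Ω → Lt) (A : Fin K → Ω → Fin 2)
    (g : Fin K → Fin 2 → (Fin K → Lt) → (Fin K → Fin 2) → Fin 2)
    (abar : Fin K → Fin 2) (lbar : Fin K → Lt) (t : Fin K) : ℝ :=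
  qMTP P L A g t lbar abar (abar t) / prop P L A abar lbar t

lemma fut_ind {abar : Fin K → Fin 2} {n : ℕ} {F : Ω → ℝ} {T : Ω → Prop}
    (hF : Fut Lc Ac Yc abar n F)
    (hT : ∀ ω ω', (∀ s : Fin K, n ≤ s.val →
      Lc abar s ω = Lc abar s ω' ∧ Ac abar s ω = Ac abar s ω') → (T ω ↔ T ω')) :
    Fut Lc Ac Yc abar n (fun ω => F ω * if T ω then 1 else 0) := by
  intro ω ω' h hy
  have := hT ω ω' h
  simp only [hF ω ω' h hy, this]

lemma cH_succ (abar : Fin K → Fin 2) (lbar : Fin K → Lt) (m : Fin K) (ω : Ω) :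
    cH Lc Ac abar lbar (m.val + 1) ω ↔
      cfHist Lc Ac abar m lbar ω ∧ Ac abar m ω = abar m := by
  rw [cfHist_cH]
  unfold cH
  rw [forall_lt_succ]
  tauto

lemma stoch_claim (hP0 : ∀ ω, 0 ≤ P ω) (hcons : CfConsistent L A Y Lc Ac Yc)
    (hB12 : B12 P L A (qMTP P L A g)) (hB13 : B13 P Lc Ac Yc)
    (abar : Fin K → Fin 2) (lbar : Fin K → Lt) (n : ℕ) (hn : n ≤ K) :
    ∀ F : Ω → ℝ, Fut Lc Ac Yc abar n F →
    pp (fun t => qMTP P L A g t lbar abar (abar t)) n *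
      rI P (fun ω => ∀ s : Fin K, s.val < n → Lc abar s ω = lbar s) F
    = pp (wr P L A g abar lbar) n * rI P (cH Lc Ac abar lbar n) F := by
  induction n with
  | zero =>
    intro F _
    rw [pp_zero, pp_zero]
    congr 1
    exact rI_congr (fun ω => by simp [cH]) (fun _ _ => rfl)
  | succ n ih =>
    intro F hF
    obtain ⟨m, rfl⟩ : ∃ m : Fin K, m.val = n := ⟨⟨n, hn⟩, rfl⟩
    have hF' := fut_ind (T := fun ω => Lc abar m ω = lbar m) (fut_mono (Nat.le_succ _) hF)
      (fun ω ω' h => by rw [(h m le_rfl).1])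
    have h := ih (by omega) _ hF'
    rw [rI_ind, rI_ind] at h
    rw [pp_succ, pp_succ, rI_congr (fun ω => forall_lt_succ) (fun _ _ => rfl),
      rI_congr (cH_succ abar lbar m) (fun _ _ => rfl)]
    rw [← rI_congr (cfHist_cH abar lbar m) (fun _ _ => rfl)] at h
    have k := key1 hP0 hcons hB12 hB13 abar lbar m hF
    unfold wr at h ⊢
    linear_combination (qMTP P L A g m lbar abar (abar m)) * h + (pp (fun t => qMTP P L A g t lbar abar (abar t) / prop P L A abar lbar t) m.val) * k

/-- MTP history below `n`, in terms of the static regime. -/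
def dH (Lc : (Fin K → Fin 2) → Fin K → Ω → Lt) (Ap : Fin K → Ω → Fin 2)
    (abar : Fin K → Fin 2) (lbar : Fin K → Lt) (n : ℕ) : Ω → Prop :=
  fun ω => ∀ s : Fin K, s.val < n → Lc abar s ω = lbar s ∧ Ap s ω = abar s

lemma Ap_eq (hcfpre : CfPrefixDep Lc Ac) (hg : PolPrefixDep g)
    {Ap : Fin K → Ω → Fin 2} (hAp : IsMTPProcess Lc Ac g Ap)
    {abar : Fin K → Fin 2} {lbar : Fin K → Lt} {m : Fin K} {ω : Ω}
    (h : dH Lc Ap abar lbar m.val ω) (h2 : Lc abar m ω = lbar m) :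
    Ap m ω = g m (Ac abar m ω) lbar abar := by
  rw [hAp m ω]
  have e : ∀ s : Fin K, s < m → Ap s ω = abar s := fun s hs => (h s hs).2
  rw [(hcfpre (fun s => Ap s ω) abar m e).2]
  refine hg m _ _ _ _ _ (fun s hs => ?_) e
  rw [(hcfpre (fun s => Ap s ω) abar s (fun r hr => e r (lt_of_lt_of_le hr hs))).1]
  rcases hs.lt_or_eq with h' | h'
  · exact (h s h').1
  · rw [h']; exact h2

lemma mtp_claim (hP0 : ∀ ω, 0 ≤ P ω) (hcfpre : CfPrefixDep Lc Ac)
    (hcons : CfConsistent L A Y Lc Ac Yc) (hg : PolPrefixDep g)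
    {Ap : Fin K → Ω → Fin 2} (hAp : IsMTPProcess Lc Ac g Ap)
    (hB12 : B12 P L A (qMTP P L A g)) (hB13 : B13 P Lc Ac Yc)
    (abar : Fin K → Fin 2) (lbar : Fin K → Lt) (n : ℕ) (hn : n ≤ K) :
    ∀ F : Ω → ℝ, Fut Lc Ac Yc abar n F →
    rI P (dH Lc Ap abar lbar n) F
    = pp (wr P L A g abar lbar) n * rI P (cH Lc Ac abar lbar n) F := by
  induction n with
  | zero =>
    intro F _
    rw [pp_zero, one_mul]
    exact rI_congr (fun ω => by simp [cH, dH]) (fun _ _ => rfl)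
  | succ n ih =>
    intro F hF
    obtain ⟨m, rfl⟩ : ∃ m : Fin K, m.val = n := ⟨⟨n, hn⟩, rfl⟩
    have hF' := fut_ind (T := fun ω => Lc abar m ω = lbar m ∧ g m (Ac abar m ω) lbar abar = abar m)
      (fut_mono (Nat.le_succ _) hF)
      (fun ω ω' h => by rw [(h m le_rfl).1, (h m le_rfl).2])
    have h := ih (by omega) _ hF'
    rw [rI_ind, rI_ind] at h
    rw [pp_succ, rI_congr (cH_succ abar lbar m) (fun _ _ => rfl)]
    have e1 : ∀ ω, dH Lc Ap abar lbar (m.val + 1) ω ↔ (dH Lc Ap abar lbar m.val ω ∧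
        Lc abar m ω = lbar m ∧ g m (Ac abar m ω) lbar abar = abar m) := by
      intro ω
      have : dH Lc Ap abar lbar (m.val + 1) ω ↔ (dH Lc Ap abar lbar m.val ω ∧
        Lc abar m ω = lbar m ∧ Ap m ω = abar m) := by unfold dH; exact forall_lt_succ
      rw [this]
      refine and_congr_right fun h1 => and_congr_right fun h2 => ?_
      rw [Ap_eq hcfpre hg hAp h1 h2]
    have e2 : ∀ ω, (cH Lc Ac abar lbar m.val ω ∧
        Lc abar m ω = lbar m ∧ g m (Ac abar m ω) lbar abar = abar m) ↔
        (cfHist Lc Ac abar m lbar ω ∧ g m (Ac abar m ω) lbar abar = abar m) := by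
      intro ω; rw [cfHist_cH]; tauto
    rw [rI_congr e2 (fun _ _ => rfl), key2 (L := L) (A := A) hP0 hcons hB13 abar lbar m hF,
      key1 hP0 hcons hB12 hB13 abar lbar m hF] at h
    rw [rI_congr e1 (fun _ _ => rfl), h]
    unfold wr
    ring

/-- MTP history event of the statement. -/
lemma dEv_iff (hcfpre : CfPrefixDep Lc Ac) (Ap : Fin K → Ω → Fin 2)
    (abar : Fin K → Fin 2) (lbar : Fin K → Lt) (t : Fin K) (ω : Ω) :
    ((∀ s, s ≤ t → Lc (fun s' => Ap s' ω) s ω = lbar s) ∧ (∀ s, s < t → Ap s ω = abar s)) ↔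
      (dH Lc Ap abar lbar t.val ω ∧ Lc abar t ω = lbar t) := by
  have aux : (∀ s, s < t → Ap s ω = abar s) → ∀ s, s ≤ t →
      Lc (fun s' => Ap s' ω) s ω = Lc abar s ω := fun h s hs => by
    rw [(hcfpre (fun s => Ap s ω) abar s (fun r hr => h r (lt_of_lt_of_le hr hs))).1]
  constructor
  · rintro ⟨h1, h2⟩
    refine ⟨fun s hs => ⟨?_, h2 s hs⟩, ?_⟩
    · rw [← aux h2 s (Fin.le_def.2 hs.le)]; exact h1 s (Fin.le_def.2 hs.le)
    · rw [← aux h2 t le_rfl]; exact h1 t le_rfl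
  · rintro ⟨h1, h2⟩
    have h3 : ∀ s, s < t → Ap s ω = abar s := fun s hs => (h1 s hs).2
    refine ⟨fun s hs => ?_, h3⟩
    rw [aux h3 s hs]
    rcases hs.lt_or_eq with h' | h'
    · exact (h1 s h').1
    · rw [h']; exact h2

lemma prD (hP0 : ∀ ω, 0 ≤ P ω) (hcfpre : CfPrefixDep Lc Ac)
    (hcons : CfConsistent L A Y Lc Ac Yc) (hg : PolPrefixDep g)
    {Ap : Fin K → Ω → Fin 2} (hAp : IsMTPProcess Lc Ac g Ap)
    (hB12 : B12 P L A (qMTP P L A g)) (hB13 : B13 P Lc Ac Yc)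
    (abar : Fin K → Fin 2) (lbar : Fin K → Lt) (t : Fin K) :
    pr P (fun ω => (∀ s, s ≤ t → Lc (fun s' => Ap s' ω) s ω = lbar s) ∧
      (∀ s, s < t → Ap s ω = abar s))
    = pp (wr P L A g abar lbar) t.val * pr P (cfHist Lc Ac abar t lbar) := by
  have hF := fut_ind (T := fun ω => Lc abar t ω = lbar t)
    (show Fut Lc Ac Yc abar t.val (fun _ => 1) from fun _ _ _ _ => rfl)
    (fun ω ω' h => by rw [(h t le_rfl).1])
  have h := mtp_claim hP0 hcfpre hcons hg hAp hB12 hB13 abar lbar t.val t.isLt.le _ hF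
  rw [rI_ind, rI_ind] at h
  rw [pr_congr (dEv_iff hcfpre Ap abar lbar t), pr_eq_rI, h, pr_eq_rI,
    rI_congr (cfHist_cH abar lbar t) (fun _ _ => rfl)]

lemma part1 (hP0 : ∀ ω, 0 ≤ P ω) (hcfpre : CfPrefixDep Lc Ac)
    (hcons : CfConsistent L A Y Lc Ac Yc) (hg : PolPrefixDep g)
    {Ap : Fin K → Ω → Fin 2} (hAp : IsMTPProcess Lc Ac g Ap)
    (hB12 : B12 P L A (qMTP P L A g)) (hB13 : B13 P Lc Ac Yc)
    (t : Fin K) (lbar : Fin K → Lt) (abar : Fin K → Fin 2)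
    (hpos : 0 < pr P (fun ω => (∀ s, s ≤ t → Lc (fun s' => Ap s' ω) s ω = lbar s) ∧
            (∀ s, s < t → Ap s ω = abar s))) (aplus : Fin 2) :
    qMTPcf P Lc Ac g Ap t lbar abar aplus = qMTP P L A g t lbar abar aplus := by
  have hF := fut_ind (T := fun ω => Lc abar t ω = lbar t ∧ g t (Ac abar t ω) lbar abar = aplus)
    (show Fut Lc Ac Yc abar t.val (fun _ => 1) from fun _ _ _ _ => rfl)
    (fun ω ω' h => by rw [(h t le_rfl).1, (h t le_rfl).2])
  have h := mtp_claim hP0 hcfpre hcons hg hAp hB12 hB13 abar lbar t.val t.isLt.le _ hF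
  rw [rI_ind, rI_ind] at h
  have e2 : ∀ ω, (cH Lc Ac abar lbar t.val ω ∧
        Lc abar t ω = lbar t ∧ g t (Ac abar t ω) lbar abar = aplus) ↔
        (cfHist Lc Ac abar t lbar ω ∧ g t (Ac abar t ω) lbar abar = aplus) := by
      intro ω; rw [cfHist_cH]; tauto
  rw [rI_congr e2 (fun _ _ => rfl), key2 (L := L) (A := A) hP0 hcons hB13 abar lbar t
    (show Fut Lc Ac Yc abar (t.val + 1) (fun _ => 1) from fun _ _ _ _ => rfl),
    ← pr_eq_rI, ← pr_eq_rI] at h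
  have hD := prD hP0 hcfpre hcons hg hAp hB12 hB13 abar lbar t
  unfold qMTPcf cpr
  rw [div_eq_iff hpos.ne', hD]
  rw [pr_congr (T := fun ω => dH Lc Ap abar lbar t.val ω ∧
        Lc abar t ω = lbar t ∧ g t (Ac abar t ω) lbar abar = aplus), h]
  · ring
  · intro ω
    rw [and_comm]
    beta_reduce
    rw [dEv_iff hcfpre Ap abar lbar t, and_assoc]
    refine and_congr_right fun h1 => and_congr_right fun h2 => ?_
    rw [(hcfpre (fun s => Ap s ω) abar t (fun s hs => (h1 s hs).2)).2]

lemma prod_eq (hP0 : ∀ ω, 0 ≤ P ω) (hcfpre : CfPrefixDep Lc Ac)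
    (hcons : CfConsistent L A Y Lc Ac Yc) (hg : PolPrefixDep g)
    {Ap : Fin K → Ω → Fin 2} (hAp : IsMTPProcess Lc Ac g Ap)
    (hB12 : B12 P L A (qMTP P L A g)) (hB13 : B13 P Lc Ac Yc)
    (lbar : Fin K → Lt) (abar : Fin K → Fin 2)
    (hpos : 0 < pr P (fun ω => ∀ s, Lc abar s ω = lbar s)) :
    ∏ t, qMTPcf P Lc Ac g Ap t lbar abar (abar t) = ∏ t, qMTP P L A g t lbar abar (abar t) := by
  by_cases hall : ∀ t : Fin K, 0 < pr P (fun ω =>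
      (∀ s, s ≤ t → Lc (fun s' => Ap s' ω) s ω = lbar s) ∧ (∀ s, s < t → Ap s ω = abar s))
  · exact Finset.prod_congr rfl fun t _ =>
      part1 hP0 hcfpre hcons hg hAp hB12 hB13 t lbar abar (hall t) _
  · push Not at hall
    obtain ⟨t, ht⟩ := hall
    have h0 := le_antisymm ht (pr_nonneg hP0 _)
    have hcf : qMTPcf P Lc Ac g Ap t lbar abar (abar t) = 0 := by
      unfold qMTPcf cpr; rw [h0, div_zero]
    rw [Finset.prod_eq_zero (Finset.mem_univ t) hcf]
    have hD := prD hP0 hcfpre hcons hg hAp hB12 hB13 abar lbar t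
    rw [h0] at hD
    have hF := fut_ind (T := fun ω => Lc abar t ω = lbar t)
      (show Fut Lc Ac Yc abar t.val (fun _ => 1) from fun _ _ _ _ => rfl)
      (fun ω ω' h => by rw [(h t le_rfl).1])
    have h := stoch_claim hP0 hcons hB12 hB13 abar lbar t.val t.isLt.le _ hF
    rw [rI_ind, rI_ind, ← rI_congr (cfHist_cH abar lbar t) (fun _ _ => rfl), ← pr_eq_rI,
      ← pr_eq_rI, ← hD] at h
    have h2 : 0 < pr P (fun ω => (∀ s : Fin K, s.val < t.val → Lc abar s ω = lbar s) ∧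
        Lc abar t ω = lbar t) :=
      lt_of_lt_of_le hpos (pr_mono hP0 fun ω h => ⟨fun s _ => h s, h t⟩)
    have h3 := (mul_eq_zero.1 h).resolve_right h2.ne'
    unfold pp at h3
    obtain ⟨s, -, hs⟩ := Finset.prod_eq_zero_iff.1 h3
    exact (Finset.prod_eq_zero (Finset.mem_univ s) hs).symm

lemma stoch_expand [Fintype Lt]
    (q : Fin K → (Fin K → Lt) → (Fin K → Fin 2) → Fin 2 → ℝ) :
    stochMean P Lc Yc q = ∑ lbar : Fin K → Lt, ∑ abar : Fin K → Fin 2,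
      (∏ t, q t lbar abar (abar t)) *
        rI P (fun ω => ∀ s, Lc abar s ω = lbar s) (Yc abar) := by
  unfold stochMean
  rw [Finset.sum_comm]
  refine Finset.sum_congr rfl fun abar _ => ?_
  have : expec P (fun ω => Yc abar ω * ∏ t, q t (fun s => Lc abar s ω) abar (abar t))
      = rI P (fun _ => True)
        (fun ω => Yc abar ω * ∏ t, q t (fun s => Lc abar s ω) abar (abar t)) := by
    simp [expec, rI]
  rw [this, rI_fib_univ P _ _ (fun ω s => Lc abar s ω)]
  refine Finset.sum_congr rfl fun lbar _ => ?_
  rw [← rI_mul_const]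
  refine rI_congr (fun ω => by simp [funext_iff]) ?_
  rintro ω ⟨-, h⟩
  rw [h]

lemma gform_tele (hP0 : ∀ ω, 0 ≤ P ω) (hP1 : (∑ ω, P ω) = 1)
    (abar : Fin K → Fin 2) (lbar : Fin K → Lt) (n : ℕ) (hn : n ≤ K) :
    pr P (fun ω => ∀ s : Fin K, s.val < n → L s ω = lbar s ∧ A s ω = abar s)
     = pp (fun j => cpr P (fun ω => L j ω = lbar j)
          (fun ω => (∀ s, s < j → L s ω = lbar s) ∧ (∀ s, s < j → A s ω = abar s))) n
       * pp (prop P L A abar lbar) n := by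
  induction n with
  | zero => rw [pp_zero, pp_zero]; simp [pr, hP1]
  | succ n ih =>
    obtain ⟨m, rfl⟩ : ∃ m : Fin K, m.val = n := ⟨⟨n, hn⟩, rfl⟩
    have h := ih (by omega)
    rw [pp_succ, pp_succ]
    set B : Ω → Prop := fun ω => ∀ s : Fin K, s.val < m.val → L s ω = lbar s ∧ A s ω = abar s with hB
    set H : Ω → Prop := histEvent L A m lbar abar with hH
    have e0 : ∀ ω, ((∀ s, s < m → L s ω = lbar s) ∧ (∀ s, s < m → A s ω = abar s)) ↔ B ω := by
      intro ω
      exact ⟨fun h s hs => ⟨h.1 s hs, h.2 s hs⟩, fun h => ⟨fun s hs => (h s hs).1, fun s hs => (h s hs).2⟩⟩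
    have e1 : ∀ ω, (L m ω = lbar m ∧ ((∀ s, s < m → L s ω = lbar s) ∧
        (∀ s, s < m → A s ω = abar s))) ↔ H ω := by
      intro ω
      rw [hH]
      constructor
      · rintro ⟨h1, h2, h3⟩
        refine ⟨fun s hs => ?_, h3⟩
        rcases hs.lt_or_eq with h' | h'
        · exact h2 s h'
        · rw [h']; exact h1
      · rintro ⟨h1, h2⟩
        exact ⟨h1 m le_rfl, fun s hs => h1 s hs.le, h2⟩
    have e2 : ∀ ω, (∀ s : Fin K, s.val < m.val + 1 → L s ω = lbar s ∧ A s ω = abar s) ↔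
        (A m ω = abar m ∧ H ω) := by
      intro ω
      rw [forall_lt_succ, ← e1, e0]
      tauto
    have hHB : ∀ ω, H ω → B ω := fun ω h => (e0 ω).1 ((e1 ω).2 h).2
    have hle1 := pr_mono hP0 hHB
    have hle2 := pr_mono (P := P) hP0 (S := fun ω => A m ω = abar m ∧ H ω) (T := H) (fun ω h => h.2)
    have hn1 := pr_nonneg hP0 H
    have hn2 := pr_nonneg hP0 (fun ω => A m ω = abar m ∧ H ω)
    have c1 : cpr P (fun ω => L m ω = lbar m)
          (fun ω => (∀ s, s < m → L s ω = lbar s) ∧ (∀ s, s < m → A s ω = abar s))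
        = pr P H / pr P B := by
      unfold cpr; rw [pr_congr e1, pr_congr e0]
    have c2 : prop P L A abar lbar m = pr P (fun ω => A m ω = abar m ∧ H ω) / pr P H := rfl
    rw [c1, c2, pr_congr e2]
    have : ∀ x y z w : ℝ, z = x * y → x * (pr P H / z) * (y * (w / pr P H))
        = z * (pr P H / z) * (w / pr P H) := by
      intro x y z w h; rw [h]; ring
    rw [this _ _ _ _ h]
    by_cases hb : pr P B = 0
    · rw [hb]; simp; linarith
    by_cases hh : pr P H = 0
    · rw [hh]; simp; linarith
    field_simp

end core

/-- Three-way concordance under model `M2`: for any MTP `g` whose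
induced kernels `q̃^g` satisfy positivity B1.2, under consistency and B1.3 the
counterfactual kernels `q^{g,cf}` coincide with `q̃^g` on all histories of positive
probability, and consequently
`E[Y^g] = E[Y^{g,cf}] = E[Y^{q̃^g}] = Ψ_{q̃^g}(P)`: the MTP mean `γ_MTP`, its
g1-stochastic analogue `γ_MTP-SI^{g1}`, and the stochastic-regime mean `γ_MTP-SI`
are all equal and all identified by the same g-formula. -/
theorem mtp_three_way_concordance_M2
    (K : ℕ) (hK : 1 ≤ K) (Ω Lt : Type) [Fintype Ω] [Fintype Lt]
    (P : Ω → ℝ) (hP0 : ∀ ω, 0 ≤ P ω) (hP1 : (∑ ω, P ω) = 1)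
    (L : Fin K → Ω → Lt) (A : Fin K → Ω → Fin 2) (Y : Ω → ℝ)
    (Lc : (Fin K → Fin 2) → Fin K → Ω → Lt)
    (Ac : (Fin K → Fin 2) → Fin K → Ω → Fin 2)
    (Yc : (Fin K → Fin 2) → Ω → ℝ)
    (hcfpre : CfPrefixDep Lc Ac)
    (hcons : CfConsistent L A Y Lc Ac Yc)
    (g : Fin K → Fin 2 → (Fin K → Lt) → (Fin K → Fin 2) → Fin 2)
    (hg : PolPrefixDep g)
    (Ap : Fin K → Ω → Fin 2) (hAp : IsMTPProcess Lc Ac g Ap)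
    (hB12 : B12 P L A (qMTP P L A g))
    (hB13 : B13 P Lc Ac Yc) :
    (∀ (t : Fin K) (lbar : Fin K → Lt) (abar : Fin K → Fin 2),
        0 < pr P (fun ω => (∀ s, s ≤ t → Lc (fun s' => Ap s' ω) s ω = lbar s) ∧
            (∀ s, s < t → Ap s ω = abar s)) →
        ∀ aplus : Fin 2,
          qMTPcf P Lc Ac g Ap t lbar abar aplus = qMTP P L A g t lbar abar aplus)
    ∧ expec P (fun ω => Yc (fun s => Ap s ω) ω)
        = stochMean P Lc Yc (qMTPcf P Lc Ac g Ap)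
    ∧ stochMean P Lc Yc (qMTPcf P Lc Ac g Ap) = stochMean P Lc Yc (qMTP P L A g)
    ∧ stochMean P Lc Yc (qMTP P L A g) = gform P L A Y (qMTP P L A g) := by
  have hY : ∀ abar, Fut Lc Ac Yc abar K (Yc abar) := fun abar ω ω' _ h => h
  have hstoch : stochMean P Lc Yc (qMTP P L A g) = ∑ lbar : Fin K → Lt, ∑ abar : Fin K → Fin 2,
      (∏ t, wr P L A g abar lbar t) * rI P (cH Lc Ac abar lbar K) (Yc abar) := by
    rw [stoch_expand]
    refine Finset.sum_congr rfl fun lbar _ => Finset.sum_congr rfl fun abar _ => ?_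
    have h := stoch_claim hP0 hcons hB12 hB13 abar lbar K le_rfl _ (hY abar)
    rw [pp_top, pp_top] at h
    rw [← h]
    congr 1
    exact rI_congr (fun ω => by simp) (fun _ _ => rfl)
  have hmtp : expec P (fun ω => Yc (fun s => Ap s ω) ω)
      = ∑ lbar : Fin K → Lt, ∑ abar : Fin K → Fin 2,
      (∏ t, wr P L A g abar lbar t) * rI P (cH Lc Ac abar lbar K) (Yc abar) := by
    rw [Finset.sum_comm]
    have : expec P (fun ω => Yc (fun s => Ap s ω) ω)
        = rI P (fun _ => True) (fun ω => Yc (fun s => Ap s ω) ω) := by simp [expec, rI]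
    rw [this, rI_fib_univ P _ _ (fun ω s => Ap s ω)]
    refine Finset.sum_congr rfl fun abar _ => ?_
    rw [rI_fib_univ P _ _ (fun ω s => Lc abar s ω)]
    refine Finset.sum_congr rfl fun lbar _ => ?_
    have h := mtp_claim hP0 hcfpre hcons hg hAp hB12 hB13 abar lbar K le_rfl _ (hY abar)
    rw [pp_top] at h
    rw [← h]
    refine rI_congr (fun ω => ?_) ?_
    · simp only [dH, funext_iff, true_and, Fin.is_lt, forall_true_left, forall_and]
      tauto
    · rintro ω ⟨⟨-, h⟩, -⟩
      rw [h]
  have hcf : stochMean P Lc Yc (qMTPcf P Lc Ac g Ap) = stochMean P Lc Yc (qMTP P L A g) := by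
    rw [stoch_expand, stoch_expand]
    refine Finset.sum_congr rfl fun lbar _ => Finset.sum_congr rfl fun abar _ => ?_
    rcases (pr_nonneg hP0 (fun ω => ∀ s, Lc abar s ω = lbar s)).eq_or_lt with h0 | hpos
    · rw [rI_null hP0 h0.symm (fun _ h => h)]; simp
    · rw [prod_eq hP0 hcfpre hcons hg hAp hB12 hB13 lbar abar hpos]
  refine ⟨fun t lbar abar hpos aplus =>
    part1 hP0 hcfpre hcons hg hAp hB12 hB13 t lbar abar hpos aplus, ?_, hcf, ?_⟩
  · rw [hcf, hstoch, hmtp]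
  · rw [hstoch]
    unfold gform
    refine Finset.sum_congr rfl fun lbar _ => Finset.sum_congr rfl fun abar _ => ?_
    have ht := gform_tele (L := L) (A := A) hP0 hP1 abar lbar K le_rfl
    rw [pp_top, pp_top] at ht
    have e1 : ∀ ω, (∀ s : Fin K, s.val < K → L s ω = lbar s ∧ A s ω = abar s) ↔
        ((∀ s, L s ω = lbar s) ∧ (∀ s, A s ω = abar s)) := by
      intro ω; simp only [Fin.is_lt, forall_true_left, forall_and]
    rw [pr_congr e1] at ht
    have e2 : ∀ ω, cH Lc Ac abar lbar K ω ↔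
        ((∀ s, L s ω = lbar s) ∧ (∀ s, A s ω = abar s)) := by
      intro ω
      have h := hist_iff hcons abar ω K
      simp only [Fin.is_lt, forall_true_left] at h
      simp only [cH, Fin.is_lt, forall_true_left, forall_and, h]
      refine and_congr_left fun h2 => forall_congr' fun s => ?_
      rw [(hcons.1 abar s ω (fun r _ => h2 r)).1]
    have e3 : rI P (cH Lc Ac abar lbar K) (Yc abar)
        = rI P (fun ω => (∀ s, L s ω = lbar s) ∧ (∀ s, A s ω = abar s)) Y :=
      rI_congr e2 (fun ω h => hcons.2 abar ω ((e2 ω).1 h).2)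
    have e4 : cexp P Y (fun ω => (∀ s, L s ω = lbar s) ∧ (∀ s, A s ω = abar s))
        = rI P (fun ω => (∀ s, L s ω = lbar s) ∧ (∀ s, A s ω = abar s)) Y
          / pr P (fun ω => (∀ s, L s ω = lbar s) ∧ (∀ s, A s ω = abar s)) := rfl
    rw [e3, e4]
    by_cases h0 : pr P (fun ω => (∀ s, L s ω = lbar s) ∧ (∀ s, A s ω = abar s)) = 0
    · rw [rI_null hP0 h0 (fun _ h => h)]; simp
    · rw [ht] at h0 ⊢
      have n1 := left_ne_zero_of_mul h0
      have n2 := right_ne_zero_of_mul h0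
      unfold wr
      rw [Finset.prod_div_distrib]
      field_simp
end
end

section
/- Condition B1.3 is strictly stronger than condition B1.4: for any longitudinal counterfactual model as in the context, B1.3 implies B1.4; moreover, there exist K ≥ 2 and a finite collection of observed and counterfactual variables satisfying the consistency conditions for which B1.4 holds for every m and every ā but B1.3 fails for some m and some ā. -/
open Classical

noncomputable section

/-- Law of total probability over the future natural treatment values. -/
lemma cpr_split {Ω : Type} [Fintype Ω] {K : ℕ} (P : Ω → ℝ) (m : Fin K)
    (X : Fin K → Ω → Fin 2) (E T : Ω → Prop) :
    cpr P E T = ∑ av ∈ Finset.univ.filter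
        (fun av : Fin K → Fin 2 => ∀ s, ¬ m < s → av s = 0),
      cpr P (fun ω => (∀ s, m < s → X s ω = av s) ∧ E ω) T := by
  unfold cpr pr
  rw [← Finset.sum_div, Finset.sum_comm]
  congr 1
  refine Finset.sum_congr rfl fun ω _ => ?_
  rw [Finset.sum_eq_single_of_mem (fun s => if m < s then X s ω else 0)]
  · have : ∀ s, m < s → X s ω = if m < s then X s ω else 0 := by
      intro s hs; simp [hs]
    congr 1
    apply propext
    constructor
    · rintro ⟨h1, h2⟩; exact ⟨⟨this, h1⟩, h2⟩
    · rintro ⟨⟨_, h1⟩, h2⟩; exact ⟨h1, h2⟩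
  · simp only [Finset.mem_filter, Finset.mem_univ, true_and]
    intro s hs; simp [hs]
  · intro av hav hne
    rw [if_neg]
    rintro ⟨⟨h, _⟩, _⟩
    apply hne
    funext s
    simp only [Finset.mem_filter, Finset.mem_univ, true_and] at hav
    by_cases hs : m < s
    · simp [hs, h s hs]
    · simp [hs, hav s hs]

lemma B14_of_B13 {Ω Lt : Type} [Fintype Ω] {K : ℕ} (P : Ω → ℝ)
    (Lc : (Fin K → Fin 2) → Fin K → Ω → Lt)
    (Ac : (Fin K → Fin 2) → Fin K → Ω → Fin 2)
    (Yc : (Fin K → Fin 2) → Ω → ℝ) (h : B13 P Lc Ac Yc) : B14 P Lc Ac Yc := by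
  intro m abar lbar hpos lv y
  rw [cpr_split P m (Ac abar), cpr_split P m (Ac abar)
    (fun ω => (∀ s, m < s → Lc abar s ω = lv s) ∧ Yc abar ω = y), Finset.sum_mul]
  refine Finset.sum_congr rfl fun av _ => ?_
  have := h m abar lbar hpos lv av y
  convert this using 3
  · tauto
  · funext ω; apply propext; tauto

lemma counterexample_B14 : B14 (Ω := Fin 2) (Lt := Fin 1) (K := 2) (fun _ => 1 / 2)
    (fun _ _ _ => 0) (fun _ _ ω => ω) (fun _ _ => 0) := by
  intro m abar lbar hpos lv y
  have hl : ∀ s, (0 : Fin 1) = lv s := fun s => Subsingleton.elim _ _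
  by_cases hy : (0 : ℝ) = y
  · subst hy
    have : cpr (Ω := Fin 2) (fun _ => 1 / 2) (fun _ => True)
        (cfHist (fun _ _ _ => (0 : Fin 1)) (fun _ _ ω => ω) abar m lbar) = 1 := by
      unfold cpr
      simp only [true_and]
      exact div_self hpos.ne'
    have e : (fun _ : Fin 2 => (∀ s, m < s → (0 : Fin 1) = lv s) ∧ (0 : ℝ) = 0)
        = fun _ => True := by
      funext _; exact eq_true ⟨fun s _ => hl s, rfl⟩
    have e2 : (fun ω : Fin 2 => ((∀ s, m < s → (0 : Fin 1) = lv s) ∧ (0 : ℝ) = 0) ∧ ω = abar m)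
        = fun ω => ω = abar m := by
      funext ω; exact propext ⟨fun h => h.2, fun h => ⟨⟨fun s _ => hl s, rfl⟩, h⟩⟩
    rw [e, e2, this, one_mul]
  · simp [hy, cpr, pr]

lemma counterexample_not_B13 : ¬ B13 (Ω := Fin 2) (Lt := Fin 1) (K := 2) (fun _ => 1 / 2)
    (fun _ _ _ => 0) (fun _ _ ω => ω) (fun _ _ => 0) := by
  intro h
  have := h 0 (fun _ => 0) (fun _ => 0) (by simp [pr, cfHist]) (fun _ => 0) (fun _ => 0) 0
  simp [cpr, pr, cfHist, Fin.forall_fin_two] at this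

/-- Condition B1.3 is strictly stronger than condition B1.4:
for any longitudinal counterfactual model, B1.3 implies B1.4; moreover, there exist
`K ≥ 2` and a finite collection of observed and counterfactual variables satisfying
the consistency conditions for which B1.4 holds but B1.3 fails. -/
theorem B13_strictly_stronger_than_B14
    (K : ℕ) (hK : 1 ≤ K) (Ω Lt : Type) [Fintype Ω] [Fintype Lt]
    (P : Ω → ℝ) (hP0 : ∀ ω, 0 ≤ P ω) (hP1 : (∑ ω, P ω) = 1)
    (L : Fin K → Ω → Lt) (A : Fin K → Ω → Fin 2) (Y : Ω → ℝ)
    (Lc : (Fin K → Fin 2) → Fin K → Ω → Lt)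
    (Ac : (Fin K → Fin 2) → Fin K → Ω → Fin 2)
    (Yc : (Fin K → Fin 2) → Ω → ℝ)
    (hcfpre : CfPrefixDep Lc Ac)
    (hcons : CfConsistent L A Y Lc Ac Yc) :
    (B13 P Lc Ac Yc → B14 P Lc Ac Yc)
    ∧ (∃ (K' nL n : ℕ), 2 ≤ K' ∧
        ∃ (P' : Fin n → ℝ) (L' : Fin K' → Fin n → Fin nL)
          (A' : Fin K' → Fin n → Fin 2) (Y' : Fin n → ℝ)
          (Lc' : (Fin K' → Fin 2) → Fin K' → Fin n → Fin nL)
          (Ac' : (Fin K' → Fin 2) → Fin K' → Fin n → Fin 2)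
          (Yc' : (Fin K' → Fin 2) → Fin n → ℝ),
          (∀ ω, 0 ≤ P' ω) ∧ (∑ ω, P' ω) = 1 ∧
          CfPrefixDep Lc' Ac' ∧ CfConsistent L' A' Y' Lc' Ac' Yc' ∧
          B14 P' Lc' Ac' Yc' ∧ ¬ B13 P' Lc' Ac' Yc') := by
  refine ⟨B14_of_B13 P Lc Ac Yc, 2, 1, 2, le_rfl, fun _ => 1 / 2, fun _ _ => 0, fun _ ω => ω,
    fun _ => 0, fun _ _ _ => 0, fun _ _ ω => ω, fun _ _ => 0, ?_, ?_, ?_, ?_,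
    counterexample_B14, counterexample_not_B13⟩
  · intro _; norm_num
  · norm_num
  · intro _ _ _ _; exact ⟨rfl, rfl⟩
  · exact ⟨fun _ _ _ _ => ⟨rfl, rfl⟩, fun _ _ _ => rfl⟩
end
end

section
/- Non-identification of MTP means under model M1: there exist K ≥ 2, a finite collection of observed and counterfactual variables satisfying the consistency conditions and condition B1.4, and a modified treatment policy g whose induced kernels q̃^g satisfy positivity B1.2, such that E[Y^g] ≠ Ψ_{q̃^g}(P). Consequently the MTP mean γ_MTP (and, since γ_MTP = γ_MTP-SI^{g1} under B1.4, likewise its g1-stochastic analogue) is not identified by the g-formula under model M1. -/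
open Classical

noncomputable section

/-- Non-identification of MTP means under model `M1`: there exist
`K ≥ 2`, a finite collection of observed and counterfactual variables satisfying the
consistency conditions and sequential exchangeability B1.4, and a modified treatment
policy `g` whose induced kernels `q̃^g` satisfy positivity B1.2, such that
`E[Y^g] ≠ Ψ_{q̃^g}(P)`. -/
theorem mtp_not_identified_under_M1 :
    ∃ (K nL n : ℕ), 2 ≤ K ∧
      ∃ (P : Fin n → ℝ) (L : Fin K → Fin n → Fin nL)
        (A : Fin K → Fin n → Fin 2) (Y : Fin n → ℝ)
        (Lc : (Fin K → Fin 2) → Fin K → Fin n → Fin nL)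
        (Ac : (Fin K → Fin 2) → Fin K → Fin n → Fin 2)
        (Yc : (Fin K → Fin 2) → Fin n → ℝ)
        (g : Fin K → Fin 2 → (Fin K → Fin nL) → (Fin K → Fin 2) → Fin 2)
        (Ap : Fin K → Fin n → Fin 2),
        (∀ ω, 0 ≤ P ω) ∧ (∑ ω, P ω) = 1 ∧
        CfPrefixDep Lc Ac ∧ CfConsistent L A Y Lc Ac Yc ∧
        B14 P Lc Ac Yc ∧
        PolPrefixDep g ∧ IsMTPProcess Lc Ac g Ap ∧
        B12 P L A (qMTP P L A g) ∧
        expec P (fun ω => Yc (fun s => Ap s ω) ω) ≠ gform P L A Y (qMTP P L A g) := by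
  refine ⟨2, 1, 2, le_refl _, fun _ => 1 / 2, fun _ _ => 0,
    fun t ω => if t = 0 then ω else 0, fun _ => 0, fun _ _ _ => 0,
    fun ab t ω => if t = 0 then ω else if ab 0 = 1 ∧ ω = 0 then 1 else 0,
    fun ab _ => if ab 1 = 1 then 1 else 0,
    fun t a _ _ => if t = 0 then 1 else a,
    fun t ω => if t = 0 then 1 else if ω = 0 then 1 else 0,
    ?_, ?_, ?_, ?_, ?_, ?_, ?_, ?_, ?_⟩
  · intro ω; norm_num
  · simp
  · intro ab ab' t h
    refine ⟨rfl, ?_⟩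
    fin_cases t
    · simp
    · have := h 0 (by simp)
      simp [this]
  · refine ⟨?_, ?_⟩
    · intro ab t ω h
      refine ⟨rfl, ?_⟩
      fin_cases t
      · simp
      · have h0 := h 0 (by simp)
        simp only [if_true] at h0
        subst h0
        have : ¬ (ab 0 = 1 ∧ ab 0 = 0) := by rintro ⟨h1, h2⟩; simp [h1] at h2
        simp [this]
    · intro ab ω h
      have h1 := h 1
      simp at h1
      simp [← h1]
  · intro m ab lbar hpos lv y
    have hL : ∀ s, m < s → (0 : Fin 1) = lv s := fun s _ => Subsingleton.elim _ _
    by_cases hy : (if ab 1 = 1 then (1 : ℝ) else 0) = y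
    · simp only [cpr, hy, and_true, true_and]
      rw [eq_true hL]
      simp only [true_and]
      rw [div_self hpos.ne', one_mul]
    · simp [cpr, hy, pr]
  · intro t a l l' ab ab' _ _
    rfl
  · intro t ω
    fin_cases t <;> simp
  · intro t lbar ab hpos a ha
    fin_cases t
    · have hl : lbar 0 = 0 := Subsingleton.elim _ _
      fin_cases a <;> norm_num [cpr, pr, histEvent, Fin.sum_univ_two, hl]
    · simpa [qMTP, Fin.sum_univ_two] using ha
  · have hg : ∀ q, gform (K := 2) (Lt := Fin 1) (fun _ : Fin 2 => (1 / 2 : ℝ)) (fun _ _ => 0)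
        (fun t ω => if t = 0 then ω else 0) (fun _ => 0) q = 0 := by
      intro q
      simp [gform, cexp]
    rw [hg]
    simp [expec, Fin.sum_univ_two]
end
end
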